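/- arXiv:0708.0758 — 2 statements merged into one kernel-verified Lean document; each statement's English description precedes it below -/
import Mathlib

section
/- Let n ≥ 2 and m ≥ 1. For each k = 1, …, m, let L_k ≤ F^(1)_m × … × F^(n-1)_m be the kernel of the homomorphism θ_k : F^(1)_m × … × F^(n-1)_m → ℤ^{m-1} given by θ_k(e^(i)_j) = t_j if 1 ≤ j ≤ k−1, θ_k(e^(i)_k) = 0, and θ_k(e^(i)_j) = t_{j-1} if k+1 ≤ j ≤ m, and let M = K^{n-1}_m(m). Then M is a subgroup of each L_k, and K^n_m(m) is isomorphic to the amalgamated free product L_1 ∗_M L_2 ∗_M … ∗_M L_m of the groups L_k amalgamated along the common subgroup M (the amalgamated product along the inclusion homomorphisms M ↪ L_k). -/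
/-- The element `t_j` of `ℤ^r` (written multiplicatively), where indices `j ≥ r` map to `0`. -/
def tvec (m r : ℕ) (j : Fin m) : Multiplicative (Fin r → ℤ) :=
  Multiplicative.ofAdd (if h : (j : ℕ) < r then Pi.single (⟨j, h⟩ : Fin r) (1 : ℤ) else 0)

/-- The homomorphism `F_m → ℤ^r` sending `e_j ↦ t_j` for `j ≤ r` and `e_j ↦ 0` for `j > r`. -/
def facHom (m r : ℕ) : FreeGroup (Fin m) →* Multiplicative (Fin r → ℤ) :=
  FreeGroup.lift (tvec m r)

/-- The homomorphism `θ : F_m^(1) × ⋯ × F_m^(n) → ℤ^r` with `θ(e^(i)_j) = t_j` for `j ≤ r`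
and `θ(e^(i)_j) = 0` for `j > r`. -/
def thetaHom (n m r : ℕ) : (∀ _ : Fin n, FreeGroup (Fin m)) →* Multiplicative (Fin r → ℤ) where
  toFun g := ∏ i, facHom m r (g i)
  map_one' := by simp
  map_mul' a b := by simp [Finset.prod_mul_distrib]

/-- The group `K^n_m(r) = ker θ`. -/
def Kgrp (n m r : ℕ) : Subgroup (∀ _ : Fin n, FreeGroup (Fin m)) := (thetaHom n m r).ker

/-- The values of `θ_k` on the basis of one free factor: `e_j ↦ t_j` for `j ≤ k-1`,
`e_k ↦ 0`, and `e_j ↦ t_{j-1}` for `j ≥ k+1` (1-indexed). -/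
def tveck (m : ℕ) (k : Fin m) (j : Fin m) : Multiplicative (Fin (m - 1) → ℤ) :=
  Multiplicative.ofAdd <|
    if h : (j : ℕ) < (k : ℕ) then
      Pi.single (⟨j, by have := k.isLt; omega⟩ : Fin (m - 1)) (1 : ℤ)
    else if h' : (k : ℕ) < (j : ℕ) then
      Pi.single (⟨(j : ℕ) - 1, by have := j.isLt; omega⟩ : Fin (m - 1)) (1 : ℤ)
    else 0

/-- The homomorphism `θ_k : F_m^(1) × ⋯ × F_m^(n-1) → ℤ^{m-1}`. -/
def thetaKHom (n m : ℕ) (k : Fin m) :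
    (∀ _ : Fin (n - 1), FreeGroup (Fin m)) →* Multiplicative (Fin (m - 1) → ℤ) where
  toFun g := ∏ i, FreeGroup.lift (tveck m k) (g i)
  map_one' := by simp
  map_mul' a b := by simp [Finset.prod_mul_distrib]

/-- The group `L_k = ker θ_k`. -/
def Lgrp (n m : ℕ) (k : Fin m) : Subgroup (∀ _ : Fin (n - 1), FreeGroup (Fin m)) :=
  (thetaKHom n m k).ker

section Abstract

open Monoid

variable {m : ℕ} {G : Type*} [Group G] (θ : G →* Multiplicative (Fin m → ℤ))
  (ab : FreeGroup (Fin m) →* Multiplicative (Fin m → ℤ))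

/-- fibre product kernel -/
abbrev KK : Subgroup (G × FreeGroup (Fin m)) := (θ.coprod ab).ker

lemma mem_KK (p : G × FreeGroup (Fin m)) : p ∈ KK θ ab ↔ θ p.1 * ab p.2 = 1 := by
  simp [KK, MonoidHom.mem_ker]

variable (hab : ∀ k, ab (FreeGroup.of k) = Multiplicative.ofAdd (Pi.single k (1 : ℤ)))
  (L : Fin m → Subgroup G)
  (hL : ∀ k g, g ∈ L k ↔ ∀ j, j ≠ k → Multiplicative.toAdd (θ g) j = 0)

/-- the `k`-th coordinate exponent -/
def coordHom (k : Fin m) : G →* Multiplicative ℤ :=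
  (AddMonoidHom.toMultiplicative (Pi.evalAddMonoidHom (fun _ : Fin m => ℤ) k)).comp θ

include hL in
lemma theta_eq (k : Fin m) (g : G) (hg : g ∈ L k) :
    θ g = Multiplicative.ofAdd (Pi.single k (1 : ℤ)) ^
      (Multiplicative.toAdd (coordHom θ k g)) := by
  rw [hL] at hg
  apply Multiplicative.toAdd.injective
  funext j
  by_cases h : j = k
  · subst h
    simp [coordHom, toAdd_zpow]
  · simp [hg j h, h, toAdd_zpow]

/-- map from `L k` -/
def fk (k : Fin m) : L k →* KK θ ab where
  toFun g := ⟨(g.1, FreeGroup.of k ^ (-(Multiplicative.toAdd (coordHom θ k g.1)))), by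
    rw [mem_KK]
    simp only [map_zpow, hab]
    rw [theta_eq θ L hL k g.1 g.2]
    simp⟩
  map_one' := by ext <;> simp
  map_mul' a b := by
    apply Subtype.ext
    apply Prod.ext
    · simp
    · simp only [Subgroup.coe_mul, map_mul, toAdd_mul, neg_add, zpow_add]
      rfl

theorem abstract_iso (hm : 1 ≤ m)
    (hab : ∀ k, ab (FreeGroup.of k) = Multiplicative.ofAdd (Pi.single k (1 : ℤ)))
    (hL : ∀ k g, g ∈ L k ↔ ∀ j, j ≠ k → Multiplicative.toAdd (θ g) j = 0)
    (x : Fin m → G) (hx : ∀ k, θ (x k) = Multiplicative.ofAdd (Pi.single k (1 : ℤ)))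
    (M : Subgroup G) (hM : M = θ.ker) (h : ∀ k, M ≤ L k) :
    Nonempty (KK θ ab ≃* PushoutI (fun k : Fin m => Subgroup.inclusion (h k))) := by
  subst hM
  have hxL : ∀ k, x k ∈ L k := fun k => by
    rw [hL]; intro j hj; simp [hx, hj]
  set φ := (fun k : Fin m => Subgroup.inclusion (h k)) with hφ
  have : Nonempty (Fin m) := ⟨⟨0, hm⟩⟩
  -- the forward map
  let b : θ.ker →* KK θ ab :=
    { toFun := fun g => ⟨(g.1, 1), by rw [mem_KK]; rw [map_one, mul_one]; exact g.2⟩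
      map_one' := rfl
      map_mul' := fun a b => by ext <;> simp }
  let Φ : PushoutI φ →* KK θ ab := PushoutI.lift (fun k => fk θ ab hab L hL k) b (by
    intro k
    ext g
    · rfl
    · have : θ g.1 = 1 := g.2
      simp [fk, hφ, b, coordHom, this])
  let s : FreeGroup (Fin m) →* G := FreeGroup.lift (fun k => (x k)⁻¹)
  let ρ : FreeGroup (Fin m) →* PushoutI φ :=
    FreeGroup.lift (fun k => PushoutI.of (φ := φ) k ⟨(x k)⁻¹, (L k).inv_mem (hxL k)⟩)
  have hs : ∀ w, θ (s w) * ab w = 1 := by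
    have : (θ.comp s) * ab = 1 := by
      ext k : 1
      simp [s, hx, hab]
    intro w
    exact DFunLike.congr_fun this w
  have hconj : ∀ (w : FreeGroup (Fin m)) (g : θ.ker),
      ρ w * PushoutI.base φ g = PushoutI.base φ ⟨s w * g.1 * (s w)⁻¹,
        (inferInstance : θ.ker.Normal).conj_mem _ g.2 _⟩ * ρ w := by
    have gen : ∀ k (y : L k) (g : θ.ker), PushoutI.of (φ := φ) k y * PushoutI.base φ g
        = PushoutI.base φ ⟨y.1 * g.1 * (y.1)⁻¹,
          (inferInstance : θ.ker.Normal).conj_mem _ g.2 _⟩ * PushoutI.of (φ := φ) k y := by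
      intro k y g
      rw [← PushoutI.of_apply_eq_base φ k, ← PushoutI.of_apply_eq_base φ k, ← map_mul, ← map_mul]
      congr 1
      apply Subtype.ext
      simp [hφ]
    intro w
    induction w using FreeGroup.induction_on with
    | C1 => intro g; simp
    | of k =>
      intro g
      simpa [ρ, s] using gen k ⟨(x k)⁻¹, (L k).inv_mem (hxL k)⟩ g
    | inv_of k _ =>
      intro g
      have := gen k ⟨x k, hxL k⟩ g
      have e : ρ (FreeGroup.of k)⁻¹ = PushoutI.of (φ := φ) k ⟨x k, hxL k⟩ := by
        rw [map_inv]
        simp only [ρ, FreeGroup.lift_apply_of, ← map_inv]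
        congr 1
        apply Subtype.ext
        simp
      rw [e, this]
      simp [s]
    | mul a c iha ihc =>
      intro g
      rw [map_mul, mul_assoc, ihc, ← mul_assoc, iha, mul_assoc]
      congr 2
      apply Subtype.ext
      simp [mul_assoc]
  have hmem : ∀ p : KK θ ab, p.1.1 * (s p.1.2)⁻¹ ∈ θ.ker := by
    intro p
    have h1 := (mem_KK θ ab p.1).1 p.2
    have h2 := hs p.1.2
    rw [MonoidHom.mem_ker, map_mul, map_inv, mul_inv_eq_one]
    exact mul_right_cancel (h1.trans h2.symm)
  let ψ : KK θ ab →* PushoutI φ :=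
    { toFun := fun p => PushoutI.base φ ⟨p.1.1 * (s p.1.2)⁻¹, hmem p⟩ * ρ p.1.2
      map_one' := by
        have : (⟨(1 : KK θ ab).1.1 * (s (1 : KK θ ab).1.2)⁻¹, hmem 1⟩ : θ.ker) = 1 := by
          apply Subtype.ext; simp
        rw [this]; simp
      map_mul' := fun p q => by
        rw [mul_assoc, ← mul_assoc (ρ p.1.2), hconj, ← mul_assoc, ← mul_assoc, ← map_mul,
          mul_assoc, ← map_mul ρ]
        congr 2
        apply Subtype.ext
        simp [mul_assoc] }
  have hρ : ∀ w, (Φ (ρ w)).1 = (s w, w) := by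
    have : ((KK θ ab).subtype.comp (Φ.comp ρ)) = s.prod (MonoidHom.id _) := by
      ext k : 1
      simp [Φ, ρ, s, fk, coordHom, hx]
    intro w
    exact DFunLike.congr_fun this w
  refine ⟨MonoidHom.toMulEquiv ψ Φ ?_ ?_⟩
  · apply MonoidHom.ext
    intro p
    apply Subtype.ext
    have : Φ (ψ p) = b ⟨p.1.1 * (s p.1.2)⁻¹, hmem p⟩ * Φ (ρ p.1.2) := by
      simp [ψ, Φ]
    simp only [MonoidHom.comp_apply, MonoidHom.id_apply]
    rw [this, Subgroup.coe_mul, hρ]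
    simp [b]
  · apply PushoutI.hom_ext_nonempty
    intro k
    apply MonoidHom.ext
    intro g
    have : Φ (PushoutI.of k g) = fk θ ab hab L hL k g := by simp [Φ]
    simp only [MonoidHom.comp_apply, MonoidHom.id_apply]
    rw [this]
    change PushoutI.base φ ⟨_, hmem _⟩ * ρ (FreeGroup.of k ^ _) = _
    rw [← PushoutI.of_apply_eq_base φ k, map_zpow ρ]
    have e : ρ (FreeGroup.of k) =
        PushoutI.of (φ := φ) k ⟨(x k)⁻¹, (L k).inv_mem (hxL k)⟩ := by simp [ρ]
    rw [e, ← map_zpow, ← map_mul]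
    congr 1
    apply Subtype.ext
    simp [hφ, s, fk]

end Abstract

lemma facHom_of (m : ℕ) (k : Fin m) :
    facHom m m (FreeGroup.of k) = Multiplicative.ofAdd (Pi.single k (1 : ℤ)) := by
  simp [facHom, tvec]

lemma tveck_hom (m : ℕ) (k : Fin (m + 1)) (w : FreeGroup (Fin (m + 1))) (i : Fin m) :
    Multiplicative.toAdd (FreeGroup.lift (tveck (m + 1) k) w) i
      = Multiplicative.toAdd (facHom (m + 1) (m + 1) w) (k.succAbove i) := by
  have : (AddMonoidHom.toMultiplicative (Pi.evalAddMonoidHom (fun _ : Fin m => ℤ) i)).comp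
        (FreeGroup.lift (tveck (m + 1) k)) =
      (AddMonoidHom.toMultiplicative
        (Pi.evalAddMonoidHom (fun _ : Fin (m + 1) => ℤ) (k.succAbove i))).comp
        (facHom (m + 1) (m + 1)) := by
    ext j : 1
    apply Multiplicative.toAdd.injective
    simp only [MonoidHom.comp_apply, facHom_of, FreeGroup.lift_apply_of]
    simp only [tveck, AddMonoidHom.toMultiplicative_apply_apply, toAdd_ofAdd,
      Pi.evalAddMonoidHom_apply]
    have hi := i.isLt
    have hj := j.isLt
    split_ifs with h1 h2 <;>
      simp only [Pi.single_apply, Fin.ext_iff, Fin.succAbove, Fin.lt_def, Pi.zero_apply,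
        Fin.val_castSucc] <;>
      split_ifs <;> simp_all <;> omega
  exact congrArg Multiplicative.toAdd (DFunLike.congr_fun this w)

lemma mem_Lgrp (n m : ℕ) (k : Fin (m + 1)) (g : ∀ _ : Fin n, FreeGroup (Fin (m + 1))) :
    g ∈ Lgrp (n + 1) (m + 1) k ↔
      ∀ j, j ≠ k → Multiplicative.toAdd (thetaHom n (m + 1) (m + 1) g) j = 0 := by
  have key : ∀ i : Fin m, Multiplicative.toAdd (thetaKHom (n + 1) (m + 1) k g) i =
      Multiplicative.toAdd (thetaHom n (m + 1) (m + 1) g) (k.succAbove i) := by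
    intro i
    simp only [thetaKHom, thetaHom, MonoidHom.coe_mk, OneHom.coe_mk, toAdd_prod,
      Finset.sum_apply, tveck_hom]
    rfl
  constructor
  · intro hg j hj
    obtain ⟨i, rfl⟩ := Fin.exists_succAbove_eq hj
    have hg : thetaKHom (n + 1) (m + 1) k g = 1 := hg
    rw [← key, hg]
    rfl
  · intro hg
    change thetaKHom (n + 1) (m + 1) k g = 1
    apply Multiplicative.toAdd.injective
    funext i
    exact (key i).trans (hg _ (Fin.succAbove_ne k i))

lemma thetaHom_succ (n m : ℕ) (g : ∀ _ : Fin (n + 1), FreeGroup (Fin m)) :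
    thetaHom (n + 1) m m g = thetaHom n m m (Fin.tail g) * facHom m m (g 0) := by
  simp [thetaHom, Fin.prod_univ_succ, Fin.tail, mul_comm]

/-- splitting off the first factor -/
def KgrpEquiv (n m : ℕ) : Kgrp (n + 1) m m ≃* KK (thetaHom n m m) (facHom m m) where
  toFun g := ⟨(Fin.tail g.1, g.1 0), by
    rw [mem_KK]
    exact (thetaHom_succ n m g.1).symm.trans g.2⟩
  invFun p := ⟨(Fin.cons p.1.2 p.1.1 : Fin (n + 1) → FreeGroup (Fin m)), by
    change thetaHom (n + 1) m m _ = 1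
    rw [thetaHom_succ]
    have := (mem_KK _ _ p.1).1 p.2
    simpa using this⟩
  left_inv g := by
    apply Subtype.ext
    exact Fin.cons_self_tail g.1
  right_inv p := by
    apply Subtype.ext
    simp
  map_mul' a b := rfl

/-- For `n ≥ 2`, `m ≥ 1`: with `M = K^{n-1}_m(m)` and `L_k = ker θ_k` as above, `M ≤ L_k`
for each `k`, and `K^n_m(m)` is isomorphic to the amalgamated free product
`L_1 ∗_M L_2 ∗_M ⋯ ∗_M L_m` (the pushout of the inclusions `M ↪ L_k`). -/
theorem Kgrp_iso_amalgamated_product (n m : ℕ) (hn : 2 ≤ n) (hm : 1 ≤ m) :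
    ∃ h : ∀ k : Fin m, Kgrp (n - 1) m m ≤ Lgrp n m k,
      Nonempty
        ((Kgrp n m m) ≃*
          Monoid.PushoutI (fun k : Fin m => Subgroup.inclusion (h k))) := by
  obtain ⟨n, rfl⟩ : ∃ n', n = n' + 1 + 1 := ⟨n - 2, by omega⟩
  obtain ⟨m, rfl⟩ : ∃ m', m = m' + 1 := ⟨m - 1, by omega⟩
  have h : ∀ k : Fin (m + 1), Kgrp (n + 1) (m + 1) (m + 1) ≤ Lgrp (n + 1 + 1) (m + 1) k := by
    intro k g hg
    have hg : thetaHom (n + 1) (m + 1) (m + 1) g = 1 := hg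
    refine (mem_Lgrp (n + 1) m k g).2 ?_
    intro j _
    rw [hg]
    rfl
  refine ⟨h, ?_⟩
  obtain ⟨e⟩ := abstract_iso (thetaHom (n + 1) (m + 1) (m + 1)) (facHom (m + 1) (m + 1))
    (fun k => Lgrp (n + 1 + 1) (m + 1) k) hm (facHom_of (m + 1)) (mem_Lgrp (n + 1) m)
    (fun k => Pi.mulSingle 0 (FreeGroup.of k)) (by
      intro k
      rw [thetaHom_succ]
      have : Fin.tail (Pi.mulSingle 0 (FreeGroup.of k) : Fin (n + 1) → FreeGroup (Fin (m + 1)))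
          = 1 := by
        funext i
        simp [Fin.tail]
      rw [this]
      simp [facHom_of]) (Kgrp (n + 1) (m + 1) (m + 1)) rfl h
  exact ⟨(KgrpEquiv (n + 1) (m + 1)).trans e⟩
end

section
/- Let n ≥ 2 and m ≥ 1, and fix 1 ≤ k ≤ m. Let L_k ≤ F^(1)_m × … × F^(n-1)_m be the kernel of θ_k : F^(1)_m × … × F^(n-1)_m → ℤ^{m-1} given by θ_k(e^(i)_j) = t_j if j ≤ k−1, θ_k(e^(i)_k) = 0, θ_k(e^(i)_j) = t_{j-1} if j ≥ k+1, and let p_k : F^(1)_m × … × F^(n-1)_m → ℤ be the homomorphism with p_k(e^(i)_j) = 1 if j = k and 0 otherwise. Then L_k ∩ ker p_k = K^{n-1}_m(m), and L_k is the internal semidirect product K^{n-1}_m(m) ⋊ ⟨e^(n-1)_k⟩, where ⟨e^(n-1)_k⟩ is the infinite cyclic subgroup generated by e^(n-1)_k; that is, K^{n-1}_m(m) is normal in L_k, K^{n-1}_m(m) ∩ ⟨e^(n-1)_k⟩ = {1}, and K^{n-1}_m(m)·⟨e^(n-1)_k⟩ = L_k. -/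
/-- The homomorphism `p_k : F_m^(1) × ⋯ × F_m^(n-1) → ℤ` with `p_k(e^(i)_j) = 1` if `j = k`
and `0` otherwise. -/
def pHom (n m : ℕ) (k : Fin m) :
    (∀ _ : Fin (n - 1), FreeGroup (Fin m)) →* Multiplicative ℤ where
  toFun g := ∏ i,
    FreeGroup.lift (fun j => Multiplicative.ofAdd (if j = k then (1 : ℤ) else 0)) (g i)
  map_one' := by simp
  map_mul' a b := by simp [Finset.prod_mul_distrib]

def delHom (m : ℕ) (k : Fin m) : Multiplicative (Fin m → ℤ) →* Multiplicative (Fin (m - 1) → ℤ) :=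
  AddMonoidHom.toMultiplicative
    { toFun := fun f i => f (if (i : ℕ) < k then ⟨i, by omega⟩ else ⟨i + 1, by omega⟩)
      map_zero' := rfl
      map_add' := fun _ _ => rfl }

def evHom (m : ℕ) (k : Fin m) : Multiplicative (Fin m → ℤ) →* Multiplicative ℤ :=
  AddMonoidHom.toMultiplicative (Pi.evalAddMonoidHom (fun _ => ℤ) k)

lemma delHom_tvec (m : ℕ) (k j : Fin m) : delHom m k (tvec m m j) = tveck m k j := by
  apply Multiplicative.toAdd.injective
  funext i
  simp only [delHom, tvec, tveck, AddMonoidHom.toMultiplicative_apply_apply, toAdd_ofAdd,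
    AddMonoidHom.coe_mk, ZeroHom.coe_mk]
  have := i.isLt
  have := j.isLt
  have := k.isLt
  split_ifs <;> simp only [Pi.single_apply, Fin.ext_iff, Pi.zero_apply] <;> grind

lemma evHom_tvec (m : ℕ) (k j : Fin m) :
    evHom m k (tvec m m j) = Multiplicative.ofAdd (if j = k then (1 : ℤ) else 0) := by
  apply Multiplicative.toAdd.injective
  simp [evHom, tvec, Pi.single_apply, eq_comm]

lemma thetaK_eq (n m : ℕ) (k : Fin m) (g) :
    thetaKHom n m k g = delHom m k (thetaHom (n - 1) m m g) := by
  have h : FreeGroup.lift (tveck m k) = (delHom m k).comp (facHom m m) := by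
    ext j : 1
    simp [facHom, delHom_tvec]
  simp [thetaKHom, thetaHom, h]

lemma p_eq (n m : ℕ) (k : Fin m) (g) :
    pHom n m k g = evHom m k (thetaHom (n - 1) m m g) := by
  have h : FreeGroup.lift (fun j => Multiplicative.ofAdd (if j = k then (1 : ℤ) else 0))
      = (evHom m k).comp (facHom m m) := by
    ext j : 1
    simp [facHom, evHom_tvec]
  simp [pHom, thetaHom, h]

lemma del_ev (m : ℕ) (k : Fin m) (v) (h1 : delHom m k v = 1) (h2 : evHom m k v = 1) : v = 1 := by
  apply Multiplicative.toAdd.injective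
  funext j
  have hj := j.isLt
  have hk := k.isLt
  rcases lt_trichotomy (j : ℕ) k with h | h | h
  · have := congrFun (congrArg Multiplicative.toAdd h1) ⟨j, by omega⟩
    simpa [delHom, h] using this
  · have := congrArg Multiplicative.toAdd h2
    obtain rfl : j = k := Fin.ext h
    simpa [evHom] using this
  · have := congrFun (congrArg Multiplicative.toAdd h1) ⟨j - 1, by omega⟩
    have e : ¬ ((j : ℕ) - 1 < k) := by omega
    have e2 : (j : ℕ) - 1 + 1 = j := by omega
    simpa [delHom, e, e2] using this

lemma L_inf (n m : ℕ) (k : Fin m) : Lgrp n m k ⊓ (pHom n m k).ker = Kgrp (n - 1) m m := by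
  ext g
  simp only [Lgrp, Kgrp, Subgroup.mem_inf, MonoidHom.mem_ker, thetaK_eq, p_eq]
  constructor
  · rintro ⟨h1, h2⟩
    exact del_ev m k _ h1 h2
  · intro h
    simp [h]

lemma theta_single (n m : ℕ) (k : Fin m) (i : Fin n) :
    thetaHom n m m (Pi.mulSingle i (FreeGroup.of k)) = tvec m m k := by
  change ∏ j, facHom m m ((Pi.mulSingle i (FreeGroup.of k) : Fin n → FreeGroup (Fin m)) j) = _
  rw [Finset.prod_eq_single i]
  · simp [facHom]
  · intro j _ hj
    simp [Pi.mulSingle_eq_of_ne hj]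
  · simp

/-- For `n ≥ 2`, `m ≥ 1` and `k ≤ m`: `L_k ∩ ker p_k = K^{n-1}_m(m)`, and `L_k` is the
internal semidirect product `K^{n-1}_m(m) ⋊ ⟨e^(n-1)_k⟩`: both are contained in `L_k`,
`K^{n-1}_m(m)` is normal in `L_k`, `K^{n-1}_m(m) ∩ ⟨e^(n-1)_k⟩ = 1` and
`K^{n-1}_m(m)·⟨e^(n-1)_k⟩ = L_k`. -/
theorem Lgrp_internal_semidirect_product (n m : ℕ) (hn : 2 ≤ n) (hm : 1 ≤ m) (k : Fin m) :
    Lgrp n m k ⊓ (pHom n m k).ker = Kgrp (n - 1) m m ∧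
    Kgrp (n - 1) m m ≤ Lgrp n m k ∧
    Subgroup.zpowers
        (Pi.mulSingle (⟨n - 2, by omega⟩ : Fin (n - 1)) (FreeGroup.of k)) ≤ Lgrp n m k ∧
    (∀ x ∈ Lgrp n m k, ∀ y ∈ Kgrp (n - 1) m m, x * y * x⁻¹ ∈ Kgrp (n - 1) m m) ∧
    Kgrp (n - 1) m m ⊓
        Subgroup.zpowers
          (Pi.mulSingle (⟨n - 2, by omega⟩ : Fin (n - 1)) (FreeGroup.of k)) = ⊥ ∧
    (∀ x ∈ Lgrp n m k, ∃ a ∈ Kgrp (n - 1) m m,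
      ∃ b ∈ Subgroup.zpowers
          (Pi.mulSingle (⟨n - 2, by omega⟩ : Fin (n - 1)) (FreeGroup.of k)), x = a * b) := by
  have hL : Pi.mulSingle (⟨n - 2, by omega⟩ : Fin (n - 1)) (FreeGroup.of k) ∈ Lgrp n m k := by
    simp only [Lgrp, MonoidHom.mem_ker, thetaK_eq, theta_single, delHom_tvec]
    simp [tveck]
  have hp : pHom n m k (Pi.mulSingle (⟨n - 2, by omega⟩ : Fin (n - 1)) (FreeGroup.of k))
      = Multiplicative.ofAdd 1 := by
    simp only [p_eq, theta_single, evHom_tvec, if_true]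
  have hI := L_inf n m k
  refine ⟨hI, hI ▸ inf_le_left, by simpa using hL, ?_, ?_, ?_⟩
  · intro x _ y hy
    exact (MonoidHom.normal_ker (thetaHom (n - 1) m m)).conj_mem y hy x
  · rw [eq_bot_iff]
    rintro x ⟨hx, z, rfl⟩
    have hx' : _ ∈ Kgrp (n - 1) m m := hx
    rw [← hI] at hx'
    have h2 := MonoidHom.mem_ker.1 (Subgroup.mem_inf.1 hx').2
    simp only [map_zpow, hp] at h2
    have h3 := congrArg Multiplicative.toAdd h2
    simp at h3
    simp [h3]
  · intro x hx
    refine ⟨x * (Pi.mulSingle (⟨n - 2, by omega⟩ : Fin (n - 1)) (FreeGroup.of k) ^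
      (Multiplicative.toAdd (pHom n m k x)))⁻¹, ?_, _, ⟨Multiplicative.toAdd (pHom n m k x), rfl⟩, ?_⟩
    · rw [← hI]
      refine Subgroup.mem_inf.2 ⟨mul_mem hx (inv_mem (zpow_mem hL _)), ?_⟩
      simp only [MonoidHom.mem_ker, map_mul, map_inv, map_zpow, hp]
      apply Multiplicative.toAdd.injective
      simp
    · simp
end
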